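/- arXiv:0708.4173 — 2 statements merged into one kernel-verified Lean document; each statement's English description precedes it below -/
import Mathlib

section
/- Given a recollement (S, T, U) and a Serre functor F on T with quasi-inverse F', set i_! := F' ∘ i_* ∘ i^! ∘ F ∘ i_* : S → T and j^? := j^* ∘ F' ∘ j_* ∘ j^* ∘ F : T → U. Then the six functors j_! : U → T, j^?, j^* : T → U, i^* : T → S, i_!, i_* : S → T form a recollement (U, T, S); that is: (j^?, j_!), (j_!, j^*), (i_!, i^*), (i^*, i_*) are adjoint pairs, i^* ∘ j_! = 0, the functors j_!, i_!, i_* are fully faithful, and every object X of T sits in distinguished triangles j_! j^* X → X → i_* i^* X → and i_! i^* X → X → j_! j^? X →, with the morphisms into and out of X being the relevant counit and unit morphisms. -/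
/-!
Setting: `k` a field; `S`, `T`, `U` skeletally small `k`-linear triangulated categories
with finite-dimensional Hom-spaces, `T` with split idempotents.  A recollement
`(S, T, U)` as in [BBD], and (right/left) Serre functors in the sense of
Reiten–Van den Bergh.
-/

open CategoryTheory CategoryTheory.Limits CategoryTheory.Pretriangulated

universe v₁ v₂ v₃ u₁ u₂ u₃ u₄

/-- A right Serre structure on an endofunctor `F` of a `k`-linear category `C`:
isomorphisms `C(X, Y) ≅ C(Y, F X)^∨`, natural in `X` and `Y`.
A right Serre functor is a functor `F` equipped with such a structure. -/
structure RightSerreStructure (k : Type u₄) [Field k] (C : Type u₁) [Category.{v₁} C]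
    [Preadditive C] [CategoryTheory.Linear k C] (F : C ⥤ C) where
  equiv : ∀ X Y : C, (X ⟶ Y) ≃ₗ[k] Module.Dual k (Y ⟶ F.obj X)
  naturality_left : ∀ {X X' Y : C} (f : X' ⟶ X) (φ : X ⟶ Y) (u : Y ⟶ F.obj X'),
    equiv X' Y (f ≫ φ) u = equiv X Y φ (u ≫ F.map f)
  naturality_right : ∀ {X Y Y' : C} (φ : X ⟶ Y) (g : Y ⟶ Y') (u : Y' ⟶ F.obj X),
    equiv X Y' (φ ≫ g) u = equiv X Y φ (g ≫ u)

/-- A left Serre structure on an endofunctor `F'` of a `k`-linear category `C`: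
isomorphisms `C(X, Y) ≅ C(F' Y, X)^∨`, natural in `X` and `Y`.
A left Serre functor is a functor `F'` equipped with such a structure. -/
structure LeftSerreStructure (k : Type u₄) [Field k] (C : Type u₁) [Category.{v₁} C]
    [Preadditive C] [CategoryTheory.Linear k C] (F' : C ⥤ C) where
  equiv : ∀ X Y : C, (X ⟶ Y) ≃ₗ[k] Module.Dual k (F'.obj Y ⟶ X)
  naturality_left : ∀ {X X' Y : C} (f : X' ⟶ X) (φ : X ⟶ Y) (u : F'.obj Y ⟶ X'),
    equiv X' Y (f ≫ φ) u = equiv X Y φ (u ≫ f)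
  naturality_right : ∀ {X Y Y' : C} (φ : X ⟶ Y) (g : Y ⟶ Y') (u : F'.obj Y' ⟶ X),
    equiv X Y' (φ ≫ g) u = equiv X Y φ (F'.map g ≫ u)

/-- A Serre functor: an essentially surjective right Serre functor. -/
structure SerreFunctor (k : Type u₄) [Field k] (C : Type u₁) [Category.{v₁} C]
    [Preadditive C] [CategoryTheory.Linear k C] where
  F : C ⥤ C
  rightSerre : RightSerreStructure k C F
  essSurj : F.EssSurj

/-- A recollement of triangulated categories `(S, T, U)`:
triangulated functors `i_* = iSt : S ⥤ T`, `i^* = iUp, i^! = iSh : T ⥤ S`,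
`j^* = jUp : T ⥤ U`, `j_! = jLo, j_* = jSt : U ⥤ T` with the adjunctions,
vanishing, full faithfulness and distinguished-triangle conditions of [BBD, sec. 1.4]. -/
structure Recollement (S : Type u₁) (T : Type u₂) (U : Type u₃)
    [Category.{v₁} S] [Category.{v₂} T] [Category.{v₃} U]
    [HasZeroObject S] [HasZeroObject T] [HasZeroObject U]
    [Preadditive S] [Preadditive T] [Preadditive U]
    [HasShift S ℤ] [HasShift T ℤ] [HasShift U ℤ]
    [∀ n : ℤ, (shiftFunctor S n).Additive] [∀ n : ℤ, (shiftFunctor T n).Additive]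
    [∀ n : ℤ, (shiftFunctor U n).Additive]
    [Pretriangulated S] [Pretriangulated T] [Pretriangulated U] where
  /-- `i_* : S ⥤ T` -/
  iSt : S ⥤ T
  /-- `i^* : T ⥤ S` -/
  iUp : T ⥤ S
  /-- `i^! : T ⥤ S` -/
  iSh : T ⥤ S
  /-- `j^* : T ⥤ U` -/
  jUp : T ⥤ U
  /-- `j_! : U ⥤ T` -/
  jLo : U ⥤ T
  /-- `j_* : U ⥤ T` -/
  jSt : U ⥤ T
  [commShift_iSt : iSt.CommShift ℤ]
  [commShift_iUp : iUp.CommShift ℤ]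
  [commShift_iSh : iSh.CommShift ℤ]
  [commShift_jUp : jUp.CommShift ℤ]
  [commShift_jLo : jLo.CommShift ℤ]
  [commShift_jSt : jSt.CommShift ℤ]
  [isTriangulated_iSt : iSt.IsTriangulated]
  [isTriangulated_iUp : iUp.IsTriangulated]
  [isTriangulated_iSh : iSh.IsTriangulated]
  [isTriangulated_jUp : jUp.IsTriangulated]
  [isTriangulated_jLo : jLo.IsTriangulated]
  [isTriangulated_jSt : jSt.IsTriangulated]
  /-- `(i^*, i_*)` is an adjoint pair. -/
  adj₁ : iUp ⊣ iSt
  /-- `(i_*, i^!)` is an adjoint pair. -/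
  adj₂ : iSt ⊣ iSh
  /-- `(j_!, j^*)` is an adjoint pair. -/
  adj₃ : jLo ⊣ jUp
  /-- `(j^*, j_*)` is an adjoint pair. -/
  adj₄ : jUp ⊣ jSt
  /-- `j^* ∘ i_* = 0`. -/
  zero_comp : ∀ X : S, IsZero (jUp.obj (iSt.obj X))
  fullyFaithful_iSt : iSt.FullyFaithful
  fullyFaithful_jLo : jLo.FullyFaithful
  fullyFaithful_jSt : jSt.FullyFaithful
  /-- The distinguished triangle `i_* i^! X ⟶ X ⟶ j_* j^* X ⟶`, whose morphisms into and
  out of `X` are the counit of `(i_*, i^!)` and the unit of `(j^*, j_*)`. -/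
  triangle_a : ∀ X : T, ∃ δ : jSt.obj (jUp.obj X) ⟶ (iSt.obj (iSh.obj X))⟦(1 : ℤ)⟧,
    Triangle.mk (adj₂.counit.app X) (adj₄.unit.app X) δ ∈ distTriang T
  /-- The distinguished triangle `j_! j^* X ⟶ X ⟶ i_* i^* X ⟶`, whose morphisms into and
  out of `X` are the counit of `(j_!, j^*)` and the unit of `(i^*, i_*)`. -/
  triangle_b : ∀ X : T, ∃ δ : iSt.obj (iUp.obj X) ⟶ (jLo.obj (jUp.obj X))⟦(1 : ℤ)⟧,
    Triangle.mk (adj₃.counit.app X) (adj₁.unit.app X) δ ∈ distTriang T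

/-!
Let `L ⊣ R` with `L : C ⥤ D`. If `F` is a Serre functor on `D` and `G` an inverse Serre functor on
`C`, then `G R F` is left adjoint to `L`. Serre duality on `T` induces the Serre functor `i^! F i_*`
on `S` and the inverse Serre functor `j^* F' j_*` on `U`, so the adjunctions `i^* ⊣ i_*` and
`j_! ⊣ j^*` produce the left adjoints `i_!` of `i^*` and `j^?` of `j_!`.

Complete the counit `i_! i^* X ⟶ X` to a triangle with third vertex `C`. Then `i^* C = 0`, so `C`
lies in the essential image of `j_!`; as `j^? i_! = 0`, the map `X ⟶ C` becomes invertible under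
`j^?`. Hence `X ⟶ C` is the reflection `X ⟶ j_! j^? X`.
-/

section Linear

variable {k : Type u₄} [Semiring k] {C : Type u₁} {D : Type u₂} [Category.{v₁} C] [Category.{v₂} D]
  [Preadditive C] [Preadditive D] [CategoryTheory.Linear k D]

/-- The `k`-linear structure on a preadditive category `C` transported along a fully faithful
additive functor to a `k`-linear category. In a recollement the outer categories receive
their linear structure from the middle one in this way, which makes the gluing functors linear by
construction. -/
abbrev linearOfFullyFaithful (k : Type u₄) [Semiring k] [CategoryTheory.Linear k D] {G : C ⥤ D}
    [G.Additive] (hG : G.FullyFaithful) : CategoryTheory.Linear k C where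
  homModule X Y :=
    letI : SMul k (X ⟶ Y) := ⟨fun r f => hG.preimage (r • G.map f)⟩
    Function.Injective.module k (G.mapAddHom (X := X) (Y := Y)) (fun _ _ h => hG.map_injective h)
      fun _ _ => hG.map_preimage _
  smul_comp _ _ _ r f g := hG.map_injective <| by
    change G.map (hG.preimage (r • G.map f) ≫ g) = G.map (hG.preimage (r • G.map (f ≫ g)))
    simp
  comp_smul _ _ _ f r g := hG.map_injective <| by
    change G.map (f ≫ hG.preimage (r • G.map g)) = G.map (hG.preimage (r • G.map (f ≫ g)))
    simp

lemma linear_of_fullyFaithful {G : C ⥤ D} [G.Additive] (hG : G.FullyFaithful) :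
    letI := linearOfFullyFaithful k hG
    G.Linear k :=
  letI := linearOfFullyFaithful k hG
  ⟨fun f r => hG.map_preimage (r • G.map f)⟩

variable [CategoryTheory.Linear k C]

variable (k) in
/-- The action on morphisms of a fully faithful `k`-linear functor, as a linear equivalence. -/
noncomputable def fullyFaithfulLinearEquiv {G : C ⥤ D} [G.Additive] [G.Linear k]
    (hG : G.FullyFaithful) (X Y : C) : (X ⟶ Y) ≃ₗ[k] (G.obj X ⟶ G.obj Y) :=
  LinearEquiv.ofBijective (G.mapLinearMap k) (hG.map_bijective X Y)

@[simp]
lemma fullyFaithfulLinearEquiv_apply {G : C ⥤ D} [G.Additive] [G.Linear k]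
    (hG : G.FullyFaithful) {X Y : C} (f : X ⟶ Y) :
    fullyFaithfulLinearEquiv k hG X Y f = G.map f :=
  rfl

variable {L : C ⥤ D} {R : D ⥤ C}

variable (k) in
/-- The Hom-bijection of an adjunction with `k`-linear left adjoint, as a linear equivalence. -/
def adjunctionLinearEquiv (adj : L ⊣ R) [L.Additive] [L.Linear k] (X : C) (Y : D) :
    (L.obj X ⟶ Y) ≃ₗ[k] (X ⟶ R.obj Y) :=
  LinearEquiv.symm
    { (adj.homAddEquiv X Y).symm with
      map_smul' := fun r f => by simp [Adjunction.homEquiv_counit] }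

@[simp]
lemma adjunctionLinearEquiv_apply (adj : L ⊣ R) [L.Additive] [L.Linear k] {X : C} {Y : D}
    (f : L.obj X ⟶ Y) : adjunctionLinearEquiv k adj X Y f = adj.homEquiv X Y f :=
  rfl

@[simp]
lemma adjunctionLinearEquiv_symm_apply (adj : L ⊣ R) [L.Additive] [L.Linear k] {X : C} {Y : D}
    (f : X ⟶ R.obj Y) :
    (adjunctionLinearEquiv k adj X Y).symm f = (adj.homEquiv X Y).symm f :=
  rfl

lemma linear_of_rightAdjoint_linear (adj : L ⊣ R) [R.Linear k] : L.Linear k where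
  map_smul f r := (adj.homEquiv _ _).injective <| by
    simp [Adjunction.homEquiv_unit]

end Linear

/-- The predual form of a left Serre structure: natural isomorphisms `C(G Y, X) ≅ C(X, Y)^∨`.
The dual is placed on this side so that no double dual appears when Serre duality for `F` is
transferred to a right quasi-inverse of `F`. -/
structure InverseSerreStructure (k : Type u₄) [Field k] (C : Type u₁) [Category.{v₁} C]
    [Preadditive C] [CategoryTheory.Linear k C] (G : C ⥤ C) where
  equiv : ∀ X Y : C, (G.obj Y ⟶ X) ≃ₗ[k] Module.Dual k (X ⟶ Y)
  naturality_left : ∀ {X X' Y : C} (φ : G.obj Y ⟶ X) (f : X ⟶ X') (u : X' ⟶ Y),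
    equiv X' Y (φ ≫ f) u = equiv X Y φ (f ≫ u)
  naturality_right : ∀ {X Y Y' : C} (g : Y ⟶ Y') (φ : G.obj Y' ⟶ X) (u : X ⟶ Y),
    equiv X Y (G.map g ≫ φ) u = equiv X Y' φ (u ≫ g)

section Serre

variable {k : Type u₄} [Field k] {C : Type u₁} {D : Type u₂} [Category.{v₁} C] [Category.{v₂} D]
  [Preadditive C] [Preadditive D] [CategoryTheory.Linear k C] [CategoryTheory.Linear k D]
  {L : C ⥤ D} {R : D ⥤ C}

/-- A right quasi-inverse of a right Serre functor is an inverse Serre functor. -/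
noncomputable def RightSerreStructure.inverse {F G : C ⥤ C} (E : RightSerreStructure k C F)
    (ε : G ⋙ F ≅ 𝟭 C) : InverseSerreStructure k C G where
  equiv X Y := (E.equiv (G.obj Y) X).trans
    (Linear.homCongr k (Iso.refl X) (ε.symm.app Y)).dualMap
  naturality_left φ f u := by
    simp [Linear.homCongr_apply, E.naturality_right]
  naturality_right g φ u := by
    have := ε.inv.naturality g
    simp_all [Linear.homCongr_apply, E.naturality_left]

/-- A right Serre functor `F` on `D` induces the right Serre functor `R F L` on a full
subcategory `L : C ⥤ D` with right adjoint `R`. -/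
noncomputable def RightSerreStructure.coreflect {F : D ⥤ D} (E : RightSerreStructure k D F)
    (adj : L ⊣ R) [L.Additive] [L.Linear k] (hL : L.FullyFaithful) :
    RightSerreStructure k C (L ⋙ F ⋙ R) where
  equiv X Y := (fullyFaithfulLinearEquiv k hL X Y).trans <|
    (E.equiv (L.obj X) (L.obj Y)).trans
      (adjunctionLinearEquiv k adj Y (F.obj (L.obj X))).symm.dualMap
  naturality_left f φ u := by
    simp [E.naturality_left, Adjunction.homEquiv_naturality_right_symm]
  naturality_right φ g u := by
    simp [E.naturality_right, Adjunction.homEquiv_naturality_left_symm]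

/-- An inverse Serre functor `G` on `C` induces the inverse Serre functor `L G R` on a full
subcategory `R : D ⥤ C` with left adjoint `L`. -/
noncomputable def InverseSerreStructure.reflect {G : C ⥤ C} (E : InverseSerreStructure k C G)
    (adj : L ⊣ R) [R.Additive] [L.Additive] [L.Linear k] [R.Linear k] (hR : R.FullyFaithful) :
    InverseSerreStructure k D (R ⋙ G ⋙ L) where
  equiv X Y := (adjunctionLinearEquiv k adj (G.obj (R.obj Y)) X).trans <|
    (E.equiv (R.obj X) (R.obj Y)).trans (fullyFaithfulLinearEquiv k hR X Y).dualMap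
  naturality_left φ f u := by
    simp [E.naturality_left, Adjunction.homEquiv_naturality_right]
  naturality_right g φ u := by
    simp [E.naturality_right, Adjunction.homEquiv_naturality_left]

/-- Conjugating the right adjoint `R` of `L` by Serre duality gives a left adjoint of `L`:
`C(G R F X, Y) ≅ C(Y, R F X)^∨ ≅ D(L Y, F X)^∨ ≅ D(X, L Y)`. -/
noncomputable def InverseSerreStructure.leftAdjunction {G : C ⥤ C} {F : D ⥤ D}
    (EC : InverseSerreStructure k C G) (ED : RightSerreStructure k D F) (adj : L ⊣ R)
    [L.Additive] [L.Linear k] : F ⋙ R ⋙ G ⊣ L :=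
  Adjunction.mkOfHomEquiv
    { homEquiv X Y := ((EC.equiv Y (R.obj (F.obj X))).trans <|
        (adjunctionLinearEquiv k adj Y (F.obj X)).dualMap.trans
          (ED.equiv X (L.obj Y)).symm).toEquiv
      homEquiv_naturality_left_symm {X X' Y} f φ := (EC.equiv Y (R.obj (F.obj X))).injective <| by
        ext u
        simp [ED.naturality_left, EC.naturality_right, adj.homEquiv_naturality_right_symm]
      homEquiv_naturality_right {X Y Y'} φ g := (ED.equiv X (L.obj Y')).injective <| by
        ext u
        simp [EC.naturality_left, ED.naturality_right, adj.homEquiv_naturality_left] }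

end Serre

lemma isZero_leftAdjoint_comp {C : Type u₁} {D : Type u₂} {E : Type u₃} [Category.{v₁} C]
    [Category.{v₂} D] [Category.{v₃} E] [HasZeroMorphisms E] {L : C ⥤ D} {R : D ⥤ C} {P : D ⥤ E}
    {Q : E ⥤ D} (adj : L ⊣ R) (adj' : P ⊣ Q) (hRQ : ∀ Y : E, IsZero (R.obj (Q.obj Y))) (X : C) :
    IsZero (P.obj (L.obj X)) := by
  rw [IsZero.iff_id_eq_zero]
  exact ((adj.comp adj').homEquiv _ _).injective ((hRQ _).eq_of_tgt _ _)

section Triangulated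

variable {S : Type u₁} {T : Type u₂} {U : Type u₃}
  [Category.{v₁} S] [Category.{v₂} T] [Category.{v₃} U]
  [HasZeroObject S] [HasZeroObject T] [HasZeroObject U]
  [Preadditive S] [Preadditive T] [Preadditive U]
  [HasShift S ℤ] [HasShift T ℤ] [HasShift U ℤ]
  [∀ n : ℤ, (shiftFunctor S n).Additive] [∀ n : ℤ, (shiftFunctor T n).Additive]
  [∀ n : ℤ, (shiftFunctor U n).Additive]
  [Pretriangulated S] [Pretriangulated T] [Pretriangulated U]

lemma mem_distTriang_of_iso₃ {X Y Z Z' : T} {f : X ⟶ Y} {g : Y ⟶ Z} {h : Z ⟶ X⟦(1 : ℤ)⟧}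
    (hT : Triangle.mk f g h ∈ distTriang T) {g' : Y ⟶ Z'} (e : Z' ≅ Z) (he : g' ≫ e.hom = g) :
    Triangle.mk f g' (e.hom ≫ h) ∈ distTriang T :=
  isomorphic_distinguished _ hT _ <|
    Triangle.isoMk _ _ (Iso.refl X) (Iso.refl Y) e
      ((Category.comp_id f).trans (Category.id_comp f).symm) (he.trans (Category.id_comp g).symm)
      ((congrArg _ ((shiftFunctor T (1 : ℤ)).map_id X)).trans (Category.comp_id _))

lemma exists_distinguished_counit_unit {L : S ⥤ T} {R : T ⥤ S} {P : T ⥤ U} {Q : U ⥤ T}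
    (adj : L ⊣ R) (adj' : P ⊣ Q) [R.CommShift ℤ] [R.IsTriangulated]
    [P.CommShift ℤ] [P.IsTriangulated] [L.Full] [L.Faithful] [Q.Full] [Q.Faithful]
    (hQ : ∀ X : T, Q.essImage X ↔ IsZero (R.obj X)) (X : T) :
    ∃ δ : Q.obj (P.obj X) ⟶ (L.obj (R.obj X))⟦(1 : ℤ)⟧,
      Triangle.mk (adj.counit.app X) (adj'.unit.app X) δ ∈ distTriang T := by
  obtain ⟨C, g, d, hT⟩ := distinguished_cocone_triangle (adj.counit.app X)
  have hRC : IsZero (R.obj C) :=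
    Triangle.isZero₃_of_isIso₁ _ (R.map_distinguished _ hT)
      (inferInstanceAs (IsIso (R.map (adj.counit.app X))))
  have : IsIso (adj'.unit.app C) := adj'.isIso_unit_app_iff_mem_essImage.2 ((hQ C).2 hRC)
  have hPL : IsZero (P.obj (L.obj (R.obj X))) :=
    isZero_leftAdjoint_comp adj adj' (fun Y => (hQ _).1 (Q.obj_mem_essImage Y)) _
  have : IsIso (P.map g) :=
    (Triangle.isZero₁_iff_isIso₂ _ (P.map_distinguished _ hT)).1 hPL
  let e : Q.obj (P.obj X) ≅ C :=
    asIso (Q.map (P.map g)) ≪≫ (asIso (adj'.unit.app C)).symm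
  have he : adj'.unit.app X ≫ e.hom = g := by
    simp [e]
  exact ⟨e.hom ≫ d, mem_distTriang_of_iso₃ hT e he⟩

namespace Recollement

attribute [local instance] commShift_iSt commShift_iUp commShift_iSh commShift_jUp commShift_jLo
  commShift_jSt isTriangulated_iSt isTriangulated_iUp isTriangulated_iSh isTriangulated_jUp
  isTriangulated_jLo isTriangulated_jSt

variable (R : Recollement S T U)

lemma isZero_iUp_jLo (X : U) : IsZero (R.iUp.obj (R.jLo.obj X)) :=
  isZero_leftAdjoint_comp R.adj₃ R.adj₁ R.zero_comp X

lemma essImage_jLo_iff (X : T) : R.jLo.essImage X ↔ IsZero (R.iUp.obj X) := by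
  constructor
  · rintro ⟨Y, ⟨e⟩⟩
    exact (R.isZero_iUp_jLo Y).of_iso (R.iUp.mapIso e.symm)
  · intro hX
    obtain ⟨δ, hδ⟩ := R.triangle_b X
    have : IsIso (R.adj₃.counit.app X) :=
      (Triangle.isZero₃_iff_isIso₁ _ hδ).1 (R.iSt.map_isZero hX)
    exact R.adj₃.mem_essImage_of_counit_isIso X

/-- The upper reflection `(U, T, S)` of a recollement `(S, T, U)`, given a further left adjoint of
each of `j_!` and `i^*`. -/
noncomputable def upperReflection {P : T ⥤ U} {I : S ⥤ T} (adjP : P ⊣ R.jLo) (adjI : I ⊣ R.iUp) :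
    Recollement U T S :=
  letI := adjP.leftAdjointCommShift ℤ
  letI := adjI.leftAdjointCommShift ℤ
  haveI := adjP.commShift_of_rightAdjoint ℤ
  haveI := adjI.commShift_of_rightAdjoint ℤ
  haveI := adjP.isTriangulated_leftAdjoint
  haveI := adjI.isTriangulated_leftAdjoint
  have hI : I.FullyFaithful :=
    (Adjunction.Triple.mk adjI R.adj₁).fullyFaithfulEquiv.symm R.fullyFaithful_iSt
  haveI := hI.full
  haveI := hI.faithful
  haveI := R.fullyFaithful_jLo.full
  haveI := R.fullyFaithful_jLo.faithful
  { iSt := R.jLo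
    iUp := P
    iSh := R.jUp
    jUp := R.iUp
    jLo := I
    jSt := R.iSt
    adj₁ := adjP
    adj₂ := R.adj₃
    adj₃ := adjI
    adj₄ := R.adj₁
    zero_comp := R.isZero_iUp_jLo
    fullyFaithful_iSt := R.fullyFaithful_jLo
    fullyFaithful_jLo := hI
    fullyFaithful_jSt := R.fullyFaithful_iSt
    triangle_a := R.triangle_b
    triangle_b := exists_distinguished_counit_unit adjI adjP R.essImage_jLo_iff }

variable {k : Type u₄} [Field k] [CategoryTheory.Linear k T] {F F' : T ⥤ T}

/-- The adjunction `(j^?, j_!)`: here `j^* F' j_*` is the inverse Serre functor induced on `U`. -/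
noncomputable def adjJLo (E : RightSerreStructure k T F) (ε : F' ⋙ F ≅ 𝟭 T) :
    F ⋙ R.jUp ⋙ R.jSt ⋙ F' ⋙ R.jUp ⊣ R.jLo :=
  letI := linearOfFullyFaithful k R.fullyFaithful_jSt
  haveI : R.jSt.Linear k := linear_of_fullyFaithful R.fullyFaithful_jSt
  haveI : R.jUp.Linear k := linear_of_rightAdjoint_linear R.adj₄
  haveI : R.jLo.Linear k := linear_of_rightAdjoint_linear R.adj₃
  ((E.inverse ε).reflect R.adj₄ R.fullyFaithful_jSt).leftAdjunction E R.adj₃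

/-- The adjunction `(i_!, i^*)`: here `i^! F i_*` is the right Serre functor induced on `S`. -/
noncomputable def adjIUp (E : RightSerreStructure k T F) (ε : F' ⋙ F ≅ 𝟭 T) :
    R.iSt ⋙ F ⋙ R.iSh ⋙ R.iSt ⋙ F' ⊣ R.iUp :=
  letI := linearOfFullyFaithful k R.fullyFaithful_iSt
  haveI : R.iSt.Linear k := linear_of_fullyFaithful R.fullyFaithful_iSt
  haveI : R.iUp.Linear k := linear_of_rightAdjoint_linear R.adj₁
  (E.inverse ε).leftAdjunction (E.coreflect R.adj₂ R.fullyFaithful_iSt) R.adj₁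

end Recollement

end Triangulated

theorem reflected_recollement_upper_general
    {k : Type u₄} [Field k]
    {S : Type u₁} {T : Type u₂} {U : Type u₃}
    [Category.{v₁} S] [Category.{v₂} T] [Category.{v₃} U]
    [HasZeroObject S] [HasZeroObject T] [HasZeroObject U]
    [Preadditive S] [Preadditive T] [Preadditive U] [CategoryTheory.Linear k T]
    [HasShift S ℤ] [HasShift T ℤ] [HasShift U ℤ]
    [∀ n : ℤ, (shiftFunctor S n).Additive] [∀ n : ℤ, (shiftFunctor T n).Additive]
    [∀ n : ℤ, (shiftFunctor U n).Additive]
    [Pretriangulated S] [Pretriangulated T] [Pretriangulated U]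
    (R : Recollement S T U) {F F' : T ⥤ T} (E : RightSerreStructure k T F) (ε : F' ⋙ F ≅ 𝟭 T) :
    ∃ (adjA : (F ⋙ R.jUp ⋙ R.jSt ⋙ F' ⋙ R.jUp) ⊣ R.jLo)
      (adjB : (R.iSt ⋙ F ⋙ R.iSh ⋙ R.iSt ⋙ F') ⊣ R.iUp),
      (∀ X : U, IsZero (R.iUp.obj (R.jLo.obj X))) ∧
      Nonempty R.jLo.FullyFaithful ∧
      Nonempty (R.iSt ⋙ F ⋙ R.iSh ⋙ R.iSt ⋙ F').FullyFaithful ∧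
      Nonempty R.iSt.FullyFaithful ∧
      (∀ X : T, ∃ δ : R.iSt.obj (R.iUp.obj X) ⟶ (R.jLo.obj (R.jUp.obj X))⟦(1 : ℤ)⟧,
        Triangle.mk (R.adj₃.counit.app X) (R.adj₁.unit.app X) δ ∈ distTriang T) ∧
      (∀ X : T, ∃ δ : R.jLo.obj ((F ⋙ R.jUp ⋙ R.jSt ⋙ F' ⋙ R.jUp).obj X) ⟶
          ((R.iSt ⋙ F ⋙ R.iSh ⋙ R.iSt ⋙ F').obj (R.iUp.obj X))⟦(1 : ℤ)⟧,
        Triangle.mk (adjB.counit.app X) (adjA.unit.app X) δ ∈ distTriang T) :=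
  let R' : Recollement U T S := R.upperReflection (R.adjJLo E ε) (R.adjIUp E ε)
  ⟨R'.adj₁, R'.adj₃, R'.zero_comp, ⟨R'.fullyFaithful_iSt⟩, ⟨R'.fullyFaithful_jLo⟩,
    ⟨R'.fullyFaithful_jSt⟩, R'.triangle_a, R'.triangle_b⟩

/-- Given a recollement `(S, T, U)` and a Serre functor `F` on `T` with quasi-inverse `F'`,
set `i_! := F' ∘ i_* ∘ i^! ∘ F ∘ i_* : S ⥤ T` and `j^? := j^* ∘ F' ∘ j_* ∘ j^* ∘ F : T ⥤ U`.
Then the six functors `j_! : U ⥤ T`, `j^?, j^* : T ⥤ U`, `i^* : T ⥤ S`, `i_!, i_* : S ⥤ T`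
form a recollement `(U, T, S)`:  `(j^?, j_!)`, `(j_!, j^*)`, `(i_!, i^*)`, `(i^*, i_*)` are
adjoint pairs, `i^* ∘ j_! = 0`, the functors `j_!`, `i_!`, `i_*` are fully faithful, and
every `X : T` sits in distinguished triangles `j_! j^* X ⟶ X ⟶ i_* i^* X ⟶` and
`i_! i^* X ⟶ X ⟶ j_! j^? X ⟶` whose morphisms into and out of `X` are the relevant
counit and unit morphisms. -/
theorem reflected_recollement_upper
    {k : Type u₄} [Field k]
    {S : Type u₁} {T : Type u₂} {U : Type u₃}
    [Category.{v₁} S] [Category.{v₂} T] [Category.{v₃} U]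
    [HasZeroObject S] [HasZeroObject T] [HasZeroObject U]
    [Preadditive S] [Preadditive T] [Preadditive U]
    [CategoryTheory.Linear k S] [CategoryTheory.Linear k T] [CategoryTheory.Linear k U]
    [HasShift S ℤ] [HasShift T ℤ] [HasShift U ℤ]
    [∀ n : ℤ, (shiftFunctor S n).Additive] [∀ n : ℤ, (shiftFunctor T n).Additive]
    [∀ n : ℤ, (shiftFunctor U n).Additive]
    [Pretriangulated S] [Pretriangulated T] [Pretriangulated U]
    [EssentiallySmall.{v₁} S] [EssentiallySmall.{v₂} T] [EssentiallySmall.{v₃} U]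
    [∀ X Y : S, FiniteDimensional k (X ⟶ Y)]
    [∀ X Y : T, FiniteDimensional k (X ⟶ Y)]
    [∀ X Y : U, FiniteDimensional k (X ⟶ Y)]
    [IsIdempotentComplete T]
    (R : Recollement S T U)
    (SF : SerreFunctor k T) (F' : T ⥤ T)
    (η : SF.F ⋙ F' ≅ 𝟭 T) (ε : F' ⋙ SF.F ≅ 𝟭 T) :
    ∃ (adjA : (SF.F ⋙ R.jUp ⋙ R.jSt ⋙ F' ⋙ R.jUp) ⊣ R.jLo)
      (adjB : (R.iSt ⋙ SF.F ⋙ R.iSh ⋙ R.iSt ⋙ F') ⊣ R.iUp),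
      (∀ X : U, IsZero (R.iUp.obj (R.jLo.obj X))) ∧
      Nonempty R.jLo.FullyFaithful ∧
      Nonempty (R.iSt ⋙ SF.F ⋙ R.iSh ⋙ R.iSt ⋙ F').FullyFaithful ∧
      Nonempty R.iSt.FullyFaithful ∧
      (∀ X : T, ∃ δ : R.iSt.obj (R.iUp.obj X) ⟶ (R.jLo.obj (R.jUp.obj X))⟦(1 : ℤ)⟧,
        Triangle.mk (R.adj₃.counit.app X) (R.adj₁.unit.app X) δ ∈ distTriang T) ∧
      (∀ X : T, ∃ δ : R.jLo.obj ((SF.F ⋙ R.jUp ⋙ R.jSt ⋙ F' ⋙ R.jUp).obj X) ⟶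
          ((R.iSt ⋙ SF.F ⋙ R.iSh ⋙ R.iSt ⋙ F').obj (R.iUp.obj X))⟦(1 : ℤ)⟧,
        Triangle.mk (adjB.counit.app X) (adjA.unit.app X) δ ∈ distTriang T) :=
  reflected_recollement_upper_general R SF.rightSerre ε
end

section
/- Given a recollement (S, T, U) and a Serre functor F on T with quasi-inverse F', set i_? := F ∘ i_* ∘ i^* ∘ F' ∘ i_* : S → T and j^! := j^* ∘ F ∘ j_! ∘ j^* ∘ F' : T → U. Then the six functors j_* : U → T, j^*, j^! : T → U, i^! : T → S, i_*, i_? : S → T form a recollement (U, T, S); that is: (j^*, j_*), (j_*, j^!), (i^!, i_*), (i_*, i_?) are adjoint pairs, i^! ∘ j_* = 0, the functors j_*, i_*, i_? are fully faithful, and every object X of T sits in distinguished triangles j_* j^! X → X → i_? i^! X → and i_* i^! X → X → j_* j^* X →, with the morphisms into and out of X being the relevant counit and unit morphisms. -/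
/-!
Setting: `k` a field; `S`, `T`, `U` skeletally small `k`-linear triangulated categories
with finite-dimensional Hom-spaces, `T` with split idempotents.  A recollement
`(S, T, U)` as in [BBD], and (right/left) Serre functors in the sense of
Reiten–Van den Bergh.
-/

open CategoryTheory CategoryTheory.Limits CategoryTheory.Pretriangulated

universe v₁ v₂ v₃ u₁ u₂ u₃ u₄

/-!
Serre duality `Hom(X, Y) ≅ Hom(Y, F X)^∨` exchanges left and right orthogonality. As `j_! A` is
left orthogonal to the image of `i_*`, the object `F j_! A` is right orthogonal to it, so it lies
in the essential image of `j_*`. Likewise `F` sends a morphism inducing bijections on maps *into*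
a class of objects to one inducing bijections on maps *out of* that class. Applied to the counit of
`(j_!, j^*)` at `F' Y`, this makes `F j_! j^* F' Y ⟶ F F' Y ≅ Y` a coreflection of `Y` in the
image of `j_*`, whence `j_* ⊣ j^!`. Applied to the unit of `(i^*, i_*)` at `F' i_* A`, it compares
`i_* A` with `i_? A` on maps from the image of `i_*`, whence `i^! ⊣ i_?`. Finally the cocone of the
unit `X ⟶ i_? i^! X` is killed by `i^!`, so it lies in the image of `j_*` and is the coreflection
`j_* j^! X` of `X`.

The functors of a recollement need not be `k`-linear and `F` is not known to be triangulated, so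
duality is only ever applied to composition maps between Hom-spaces of `T`.
-/

section Adjunctions

variable {C D : Type*} [Category* C] [Category* D]

/-- The adjunction `L ⊣ G` exhibiting a fully faithful functor `L` as the inclusion of a
coreflective subcategory, from coreflection maps `θ : L (G Y) ⟶ Y` which are universal among
morphisms from objects `L X` to `Y`. -/
noncomputable def adjunctionOfCoreflection {L : C ⥤ D} (hL : L.FullyFaithful) {G : D ⥤ C}
    (θ : G ⋙ L ⟶ 𝟭 D)
    (hθ : ∀ Y, ObjectProperty.isColocal (· ∈ Set.range L.obj) (θ.app Y)) : L ⊣ G :=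
  Adjunction.mkOfHomEquiv
    { homEquiv X Y := (hL.homEquiv.trans ((hθ Y).homEquiv (L.obj X) ⟨X, rfl⟩)).symm
      homEquiv_naturality_left_symm f g := by
        simp [Functor.FullyFaithful.homEquiv, ObjectProperty.isColocal.homEquiv]
      homEquiv_naturality_right {X Y Y'} f g := by
        rw [Equiv.symm_apply_eq]
        obtain ⟨f, rfl⟩ := (hL.homEquiv.trans ((hθ Y).homEquiv (L.obj X) ⟨X, rfl⟩)).surjective f
        have θ_naturality : L.map (G.map g) ≫ θ.app Y' = θ.app Y ≫ g := θ.naturality g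
        simp [Functor.FullyFaithful.homEquiv, ObjectProperty.isColocal.homEquiv, θ_naturality] }

/-- The adjunction `G ⊣ H` for a coreflector `G`, right adjoint to a fully faithful functor `L`,
and a functor `H` compared with `L` by a natural transformation `τ : L ⟶ H`. The bijection is
`Hom(G Y, A) ≃ Hom(L (G Y), L A) ≃ Hom(L (G Y), H A) ≃ Hom(Y, H A)`, whose last two steps are
composition with `τ` and with the counit `L (G Y) ⟶ Y`. -/
noncomputable def coreflectorAdjunctionOfComparison {L H : C ⥤ D} {G : D ⥤ C}
    (hL : L.FullyFaithful) (adj : L ⊣ G) (τ : L ⟶ H)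
    (hτ : ∀ A, ObjectProperty.isColocal (· ∈ Set.range L.obj) (τ.app A))
    (hH : ∀ Y, ObjectProperty.isLocal (· ∈ Set.range H.obj) (adj.counit.app Y)) : G ⊣ H :=
  let e (Y : D) (A : C) : (G.obj Y ⟶ A) ≃ (Y ⟶ H.obj A) :=
    (hL.homEquiv.trans ((hτ A).homEquiv (L.obj (G.obj Y)) ⟨_, rfl⟩)).trans
      ((hH Y).homEquiv (H.obj A) ⟨A, rfl⟩).symm
  have counit_comp_e {Y : D} {A : C} (g : G.obj Y ⟶ A) :
      adj.counit.app Y ≫ e Y A g = L.map g ≫ τ.app A :=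
    ((hH Y).homEquiv (H.obj A) ⟨A, rfl⟩).apply_symm_apply _
  Adjunction.mkOfHomEquiv
    { homEquiv := e
      homEquiv_naturality_left_symm {Y' Y A} f g := by
        obtain ⟨g, rfl⟩ := (e Y A).surjective g
        rw [Equiv.symm_apply_apply, Equiv.symm_apply_eq]
        apply (hH Y' _ ⟨A, rfl⟩).injective
        have counit_naturality := adj.counit_naturality_assoc f (e Y A g)
        simp only [counit_comp_e, Functor.map_comp, Category.assoc] at counit_naturality ⊢
        exact counit_naturality.symm
      homEquiv_naturality_right {Y A A'} f g := by
        apply (hH Y _ ⟨A', rfl⟩).injective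
        have comp_e := counit_comp_e f =≫ H.map g
        simp only [Category.assoc] at comp_e
        simp [counit_comp_e, comp_e] }

end Adjunctions

namespace RightSerreStructure

variable {k : Type u₄} [Field k] {C : Type u₁} [Category.{v₁} C] [Preadditive C]
  [CategoryTheory.Linear k C] {F : C ⥤ C}

theorem subsingleton_hom_iff (s : RightSerreStructure k C F) (X Y : C) :
    Subsingleton (X ⟶ Y) ↔ Subsingleton (Y ⟶ F.obj X) :=
  (s.equiv X Y).toEquiv.subsingleton_congr.trans (Module.subsingleton_dual_iff k)

theorem bijective_precomp_iff (s : RightSerreStructure k C F) (X : C) {Y Y' : C} (g : Y ⟶ Y') :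
    Function.Bijective (fun u : Y' ⟶ F.obj X ↦ g ≫ u) ↔
      Function.Bijective (fun φ : X ⟶ Y ↦ φ ≫ g) := by
  have duality : s.equiv X Y' ∘ (fun φ ↦ φ ≫ g) =
      (Linear.leftComp k (F.obj X) g).dualMap ∘ s.equiv X Y := by
    ext φ u
    exact s.naturality_right φ g u
  rw [← Function.Bijective.of_comp_iff' (s.equiv X Y').bijective, duality,
    Function.Bijective.of_comp_iff _ (s.equiv X Y).bijective, LinearMap.dualMap_bijective_iff]
  rfl

theorem bijective_postcomp_map_iff (s : RightSerreStructure k C F) {X X' : C}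
    (f : X' ⟶ X) (Y : C) :
    Function.Bijective (fun u : Y ⟶ F.obj X' ↦ u ≫ F.map f) ↔
      Function.Bijective (fun φ : X ⟶ Y ↦ f ≫ φ) := by
  have duality : s.equiv X' Y ∘ (fun φ ↦ f ≫ φ) =
      (Linear.rightComp k Y (F.map f)).dualMap ∘ s.equiv X Y := by
    ext φ u
    exact s.naturality_left f φ u
  rw [← Function.Bijective.of_comp_iff' (s.equiv X' Y).bijective, duality,
    Function.Bijective.of_comp_iff _ (s.equiv X Y).bijective, LinearMap.dualMap_bijective_iff]
  rfl

theorem isColocal_map_iff (s : RightSerreStructure k C F) (P : ObjectProperty C)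
    {X X' : C} (f : X' ⟶ X) :
    P.isColocal (F.map f) ↔ P.isLocal f :=
  forall₂_congr fun Y _ ↦ s.bijective_postcomp_map_iff f Y

end RightSerreStructure

section Triangle

variable {S : Type u₁} {T : Type u₂} {U : Type u₃}
  [Category.{v₁} S] [Category.{v₂} T] [Category.{v₃} U]
  [HasZeroObject S] [HasZeroObject T] [Preadditive S] [Preadditive T]
  [HasShift S ℤ] [HasShift T ℤ]
  [∀ n : ℤ, (shiftFunctor S n).Additive] [∀ n : ℤ, (shiftFunctor T n).Additive]
  [Pretriangulated S] [Pretriangulated T]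

theorem isColocal_mor₁_of_rightOrthogonal (P : ObjectProperty T) [P.IsStableUnderShift ℤ]
    {Δ : Triangle T} (hΔ : Δ ∈ distTriang T) (h₃ : P.rightOrthogonal Δ.obj₃) :
    P.isColocal Δ.mor₁ := by
  have hP : P ≤ P.rightOrthogonal.trW.isColocal := by
    rw [ObjectProperty.isColocal_trW]
    exact fun X hX Y f hY ↦ hY f hX
  exact fun X hX ↦ hP X hX _ (ObjectProperty.trW.mk _ hΔ h₃)

theorem distinguished_of_iso_obj₁ {Δ : Triangle T} (hΔ : Δ ∈ distTriang T) {K : T}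
    (e : K ≅ Δ.obj₁) :
    Triangle.mk (e.hom ≫ Δ.mor₁) Δ.mor₂ (Δ.mor₃ ≫ e.inv⟦(1 : ℤ)⟧') ∈ distTriang T := by
  refine isomorphic_distinguished _ hΔ _ <|
    Triangle.isoMk _ _ e (Iso.refl _) (Iso.refl _) ?_ ?_ ?_
  all_goals
    dsimp [Triangle.mk]
    simp [← Functor.map_comp]

theorem exists_distinguished_counit_unit_s11 {incl : U ⥤ T} {r : T ⥤ U} {q : T ⥤ S} {ι : S ⥤ T}
    [incl.Full] [incl.Faithful] [ι.Full] [ι.Faithful] [q.CommShift ℤ] [q.IsTriangulated]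
    (adj : incl ⊣ r) (adj' : q ⊣ ι) (ker_q : ∀ K, incl.essImage K ↔ IsZero (q.obj K)) (X : T) :
    ∃ δ : ι.obj (q.obj X) ⟶ (incl.obj (r.obj X))⟦(1 : ℤ)⟧,
      Triangle.mk (adj.counit.app X) (adj'.unit.app X) δ ∈ distTriang T := by
  obtain ⟨K, κ, δ, hK⟩ := distinguished_cocone_triangle₁ (adj'.unit.app X)
  let P : ObjectProperty T := incl.essImage
  have : P.IsStableUnderShift ℤ :=
    { isStableUnderShiftBy n := ⟨fun A hA ↦ (ker_q _).2
        (((shiftFunctor S n).map_isZero ((ker_q A).1 hA)).of_iso ((q.commShiftIso n).app A))⟩ }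
  have hPK : P K := (ker_q K).2 <| Triangle.isZero₁_of_isIso₂ _ (q.map_distinguished _ hK)
    (inferInstanceAs (IsIso (q.map (adj'.unit.app X))))
  have κ_colocal : P.isColocal κ := isColocal_mor₁_of_rightOrthogonal P hK fun A f hA ↦
    (adj'.homEquiv _ _).symm.injective (((ker_q A).1 hA).eq_of_src _ _)
  have counit_colocal : P.isColocal (adj.counit.app X) := by
    rw [show P = _ from incl.isoClosure_eq_essImage.symm, ObjectProperty.isoClosure_isColocal]
    exact ObjectProperty.isColocal_adj_counit_app adj X
  obtain ⟨f : incl.obj (r.obj X) ⟶ K, hf : f ≫ κ = adj.counit.app X⟩ :=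
    (κ_colocal _ (incl.obj_mem_essImage (r.obj X))).surjective (adj.counit.app X)
  have f_colocal : P.isColocal f := P.isColocal.of_postcomp f κ κ_colocal (by rwa [hf])
  have : IsIso f := (P.isColocal_iff_isIso f (incl.obj_mem_essImage _) hPK).1 f_colocal
  let e : incl.obj (r.obj X) ≅ K := asIso f
  exact ⟨_, hf ▸ distinguished_of_iso_obj₁ hK e⟩

end Triangle

namespace Recollement

variable {S : Type u₁} {T : Type u₂} {U : Type u₃}
  [Category.{v₁} S] [Category.{v₂} T] [Category.{v₃} U]
  [HasZeroObject S] [HasZeroObject T] [HasZeroObject U]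
  [Preadditive S] [Preadditive T] [Preadditive U]
  [HasShift S ℤ] [HasShift T ℤ] [HasShift U ℤ]
  [∀ n : ℤ, (shiftFunctor S n).Additive] [∀ n : ℤ, (shiftFunctor T n).Additive]
  [∀ n : ℤ, (shiftFunctor U n).Additive]
  [Pretriangulated S] [Pretriangulated T] [Pretriangulated U] (R : Recollement S T U)

attribute [local instance] commShift_iSt commShift_iSh commShift_jUp commShift_jSt
  isTriangulated_iSt isTriangulated_iSh isTriangulated_jUp isTriangulated_jSt

instance : R.iSt.Full := R.fullyFaithful_iSt.full
instance : R.iSt.Faithful := R.fullyFaithful_iSt.faithful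
instance : R.jLo.Full := R.fullyFaithful_jLo.full
instance : R.jLo.Faithful := R.fullyFaithful_jLo.faithful
instance : R.jSt.Full := R.fullyFaithful_jSt.full
instance : R.jSt.Faithful := R.fullyFaithful_jSt.faithful

theorem essImage_jSt_iff_isZero_iSh (X : T) : R.jSt.essImage X ↔ IsZero (R.iSh.obj X) := by
  obtain ⟨δ, hδ⟩ := R.triangle_a X
  rw [← R.adj₄.isIso_unit_app_iff_mem_essImage]
  exact (Triangle.isZero₁_iff_isIso₂ _ hδ).symm.trans
    ⟨.of_full_of_faithful_of_isZero R.iSt _, R.iSt.map_isZero⟩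

variable {k : Type u₄} [Field k] [CategoryTheory.Linear k T] {F F' : T ⥤ T}

theorem essImage_jSt_obj_jLo (s : RightSerreStructure k T F) (A : U) :
    R.jSt.essImage (F.obj (R.jLo.obj A)) := by
  rw [essImage_jSt_iff_isZero_iSh, IsZero.iff_id_eq_zero]
  have left_orthogonal :
      Subsingleton (R.jLo.obj A ⟶ R.iSt.obj (R.iSh.obj (F.obj (R.jLo.obj A)))) :=
    (R.adj₃.homEquiv _ _).subsingleton_congr.2 ⟨(R.zero_comp _).eq_of_tgt⟩
  have right_orthogonal := (s.subsingleton_hom_iff _ _).1 left_orthogonal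
  exact (R.adj₂.homEquiv _ _).symm.injective (Subsingleton.elim _ _)

theorem isColocal_jSt_map_counit (s : RightSerreStructure k T F) (Z : T) :
    ObjectProperty.isColocal (· ∈ Set.range R.jSt.obj) (F.map (R.adj₃.counit.app Z)) := by
  rw [s.isColocal_map_iff, ObjectProperty.isLocal_iff_isIso_map R.adj₄]
  infer_instance

theorem isColocal_iSt_map_unit (s : RightSerreStructure k T F) (Z : T) :
    ObjectProperty.isColocal (· ∈ Set.range R.iSt.obj) (F.map (R.adj₁.unit.app Z)) := by
  rw [s.isColocal_map_iff]
  exact ObjectProperty.isLocal_adj_unit_app R.adj₁ Z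

variable (s : RightSerreStructure k T F) (ε : F' ⋙ F ≅ 𝟭 T)

/-- The adjunction `j_* ⊣ j^!`, where `j^! = j^* F j_! j^* F'`. Serre duality identifies
`F j_! j^* F' Y` with the coreflection of `Y` in the essential image of `j_*`. -/
noncomputable def jStAdjunction : R.jSt ⊣ F' ⋙ R.jUp ⋙ R.jLo ⋙ F ⋙ R.jUp :=
  let P : T ⥤ T := F' ⋙ R.jUp ⋙ R.jLo ⋙ F
  let π : P ⟶ 𝟭 T := F'.whiskerLeft (Functor.whiskerRight R.adj₃.counit F) ≫ ε.hom
  have : IsIso (P.whiskerLeft R.adj₄.unit) := by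
    refine (NatTrans.isIso_iff_isIso_app _).2 fun Y ↦ ?_
    exact R.adj₄.isIso_unit_app_iff_mem_essImage.2 (R.essImage_jSt_obj_jLo s _)
  adjunctionOfCoreflection R.fullyFaithful_jSt (inv (P.whiskerLeft R.adj₄.unit) ≫ π) fun Y ↦
    (ObjectProperty.isColocal _).comp_mem _ _ (ObjectProperty.isColocal_of_isIso _ _)
      ((ObjectProperty.isColocal _).comp_mem _ _ (R.isColocal_jSt_map_counit s (F'.obj Y))
        (ObjectProperty.isColocal_of_isIso _ _))

/-- The adjunction `i^! ⊣ i_?`, where `i_? = F i_* i^* F' i_*`. -/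
noncomputable def iShAdjunction : R.iSh ⊣ R.iSt ⋙ F' ⋙ R.iUp ⋙ R.iSt ⋙ F :=
  coreflectorAdjunctionOfComparison R.fullyFaithful_iSt R.adj₂
    (R.iSt.whiskerLeft (ε.inv ≫ F'.whiskerLeft (Functor.whiskerRight R.adj₁.unit F)))
    (fun A ↦ (ObjectProperty.isColocal _).comp_mem _ _ (ObjectProperty.isColocal_of_isIso _ _)
      (R.isColocal_iSt_map_unit s _))
    (by
      rintro Y _ ⟨A, rfl⟩
      exact (s.bijective_precomp_iff _ _).2
        (ObjectProperty.isColocal_adj_counit_app R.adj₂ Y _ ⟨_, rfl⟩))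

/-- The lower reflection of a recollement `(S, T, U)` along a right Serre functor `F` of
`T` with right quasi-inverse `F'`: the recollement `(U, T, S)` formed by `j_*`, `j^*`, `j^!`,
`i^!`, `i_*` and `i_?`, where `j^! = j^* F j_! j^* F'` and `i_? = F i_* i^* F' i_*`. -/
noncomputable def lowerReflection : Recollement U T S :=
  let adjA := R.jStAdjunction s ε
  let adjB := R.iShAdjunction s ε
  let hff : (R.iSt ⋙ F' ⋙ R.iUp ⋙ R.iSt ⋙ F).FullyFaithful :=
    (Adjunction.Triple.fullyFaithfulEquiv ⟨R.adj₂, adjB⟩) R.fullyFaithful_iSt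
  letI := adjA.rightAdjointCommShift ℤ
  letI := adjB.rightAdjointCommShift ℤ
  haveI := adjA.commShift_of_leftAdjoint ℤ
  haveI := adjB.commShift_of_leftAdjoint ℤ
  haveI := hff.full
  haveI := hff.faithful
  { iSt := R.jSt
    iUp := R.jUp
    iSh := F' ⋙ R.jUp ⋙ R.jLo ⋙ F ⋙ R.jUp
    jUp := R.iSh
    jLo := R.iSt
    jSt := R.iSt ⋙ F' ⋙ R.iUp ⋙ R.iSt ⋙ F
    isTriangulated_iSh := adjA.isTriangulated_rightAdjoint
    isTriangulated_jSt := adjB.isTriangulated_rightAdjoint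
    adj₁ := R.adj₄
    adj₂ := adjA
    adj₃ := R.adj₂
    adj₄ := adjB
    zero_comp := fun A ↦ (R.essImage_jSt_iff_isZero_iSh _).1 (R.jSt.obj_mem_essImage A)
    fullyFaithful_iSt := R.fullyFaithful_jSt
    fullyFaithful_jLo := R.fullyFaithful_iSt
    fullyFaithful_jSt := hff
    triangle_a := exists_distinguished_counit_unit_s11 adjA adjB R.essImage_jSt_iff_isZero_iSh
    triangle_b := R.triangle_a }

end Recollement

theorem reflected_recollement_lower_general
    {k : Type u₄} [Field k]
    {S : Type u₁} {T : Type u₂} {U : Type u₃}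
    [Category.{v₁} S] [Category.{v₂} T] [Category.{v₃} U]
    [HasZeroObject S] [HasZeroObject T] [HasZeroObject U]
    [Preadditive S] [Preadditive T] [Preadditive U] [CategoryTheory.Linear k T]
    [HasShift S ℤ] [HasShift T ℤ] [HasShift U ℤ]
    [∀ n : ℤ, (shiftFunctor S n).Additive] [∀ n : ℤ, (shiftFunctor T n).Additive]
    [∀ n : ℤ, (shiftFunctor U n).Additive]
    [Pretriangulated S] [Pretriangulated T] [Pretriangulated U]
    (R : Recollement S T U) {F F' : T ⥤ T}
    (s : RightSerreStructure k T F) (ε : F' ⋙ F ≅ 𝟭 T) :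
    ∃ (adjA : R.jSt ⊣ (F' ⋙ R.jUp ⋙ R.jLo ⋙ F ⋙ R.jUp))
      (adjB : R.iSh ⊣ (R.iSt ⋙ F' ⋙ R.iUp ⋙ R.iSt ⋙ F)),
      (∀ X : U, IsZero (R.iSh.obj (R.jSt.obj X))) ∧
      Nonempty R.jSt.FullyFaithful ∧
      Nonempty R.iSt.FullyFaithful ∧
      Nonempty (R.iSt ⋙ F' ⋙ R.iUp ⋙ R.iSt ⋙ F).FullyFaithful ∧
      (∀ X : T, ∃ δ : (R.iSt ⋙ F' ⋙ R.iUp ⋙ R.iSt ⋙ F).obj (R.iSh.obj X) ⟶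
          (R.jSt.obj ((F' ⋙ R.jUp ⋙ R.jLo ⋙ F ⋙ R.jUp).obj X))⟦(1 : ℤ)⟧,
        Triangle.mk (adjA.counit.app X) (adjB.unit.app X) δ ∈ distTriang T) ∧
      (∀ X : T, ∃ δ : R.jSt.obj (R.jUp.obj X) ⟶ (R.iSt.obj (R.iSh.obj X))⟦(1 : ℤ)⟧,
        Triangle.mk (R.adj₂.counit.app X) (R.adj₄.unit.app X) δ ∈ distTriang T) :=
  let R' := R.lowerReflection s ε
  ⟨R'.adj₂, R'.adj₄, R'.zero_comp, ⟨R'.fullyFaithful_iSt⟩, ⟨R'.fullyFaithful_jLo⟩,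
    ⟨R'.fullyFaithful_jSt⟩, R'.triangle_a, R'.triangle_b⟩

/-- Given a recollement `(S, T, U)` and a Serre functor `F` on `T` with quasi-inverse `F'`,
set `i_? := F ∘ i_* ∘ i^* ∘ F' ∘ i_* : S ⥤ T` and `j^! := j^* ∘ F ∘ j_! ∘ j^* ∘ F' : T ⥤ U`.
Then the six functors `j_* : U ⥤ T`, `j^*, j^! : T ⥤ U`, `i^! : T ⥤ S`, `i_*, i_? : S ⥤ T`
form a recollement `(U, T, S)`:  `(j^*, j_*)`, `(j_*, j^!)`, `(i_*, i^!)`, `(i^!, i_?)` are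
adjoint pairs, `i^! ∘ j_* = 0`, the functors `j_*`, `i_*`, `i_?` are fully faithful, and
every `X : T` sits in distinguished triangles `j_* j^! X ⟶ X ⟶ i_? i^! X ⟶` and
`i_* i^! X ⟶ X ⟶ j_* j^* X ⟶` whose morphisms into and out of `X` are the relevant
counit and unit morphisms. -/
theorem reflected_recollement_lower
    {k : Type u₄} [Field k]
    {S : Type u₁} {T : Type u₂} {U : Type u₃}
    [Category.{v₁} S] [Category.{v₂} T] [Category.{v₃} U]
    [HasZeroObject S] [HasZeroObject T] [HasZeroObject U]
    [Preadditive S] [Preadditive T] [Preadditive U]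
    [CategoryTheory.Linear k S] [CategoryTheory.Linear k T] [CategoryTheory.Linear k U]
    [HasShift S ℤ] [HasShift T ℤ] [HasShift U ℤ]
    [∀ n : ℤ, (shiftFunctor S n).Additive] [∀ n : ℤ, (shiftFunctor T n).Additive]
    [∀ n : ℤ, (shiftFunctor U n).Additive]
    [Pretriangulated S] [Pretriangulated T] [Pretriangulated U]
    [EssentiallySmall.{v₁} S] [EssentiallySmall.{v₂} T] [EssentiallySmall.{v₃} U]
    [∀ X Y : S, FiniteDimensional k (X ⟶ Y)]
    [∀ X Y : T, FiniteDimensional k (X ⟶ Y)]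
    [∀ X Y : U, FiniteDimensional k (X ⟶ Y)]
    [IsIdempotentComplete T]
    (R : Recollement S T U)
    (SF : SerreFunctor k T) (F' : T ⥤ T)
    (η : SF.F ⋙ F' ≅ 𝟭 T) (ε : F' ⋙ SF.F ≅ 𝟭 T) :
    ∃ (adjA : R.jSt ⊣ (F' ⋙ R.jUp ⋙ R.jLo ⋙ SF.F ⋙ R.jUp))
      (adjB : R.iSh ⊣ (R.iSt ⋙ F' ⋙ R.iUp ⋙ R.iSt ⋙ SF.F)),
      (∀ X : U, IsZero (R.iSh.obj (R.jSt.obj X))) ∧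
      Nonempty R.jSt.FullyFaithful ∧
      Nonempty R.iSt.FullyFaithful ∧
      Nonempty (R.iSt ⋙ F' ⋙ R.iUp ⋙ R.iSt ⋙ SF.F).FullyFaithful ∧
      (∀ X : T, ∃ δ : (R.iSt ⋙ F' ⋙ R.iUp ⋙ R.iSt ⋙ SF.F).obj (R.iSh.obj X) ⟶
          (R.jSt.obj ((F' ⋙ R.jUp ⋙ R.jLo ⋙ SF.F ⋙ R.jUp).obj X))⟦(1 : ℤ)⟧,
        Triangle.mk (adjA.counit.app X) (adjB.unit.app X) δ ∈ distTriang T) ∧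
      (∀ X : T, ∃ δ : R.jSt.obj (R.jUp.obj X) ⟶ (R.iSt.obj (R.iSh.obj X))⟦(1 : ℤ)⟧,
        Triangle.mk (R.adj₂.counit.app X) (R.adj₄.unit.app X) δ ∈ distTriang T) :=
  reflected_recollement_lower_general R SF.rightSerre ε
end
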